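/- arXiv:2602.01384 — 3 statements merged into one kernel-verified Lean document; each statement's English description precedes it below -/
import Mathlib

section
/- The elliptic curve C₉ : y² = x³ − 27 over ℚ has exactly one affine rational point, namely (3, 0). -/
lemma c9_pow_of_mul {P Q f : ℤ} {k : ℕ} (hP : 0 < P) (h : IsCoprime P Q) (e : P * Q = f ^ k) :
    ∃ a : ℤ, 0 ≤ a ∧ P = a ^ k := by
  obtain ⟨d, hd⟩ := exists_associated_pow_of_mul_eq_pow' h e
  refine ⟨|d|, abs_nonneg d, ?_⟩
  have := Int.associated_iff_natAbs.1 hd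
  have h2 : |d ^ k| = |P| := by
    rw [Int.abs_eq_natAbs, Int.abs_eq_natAbs, this]
  rw [abs_pow, abs_of_pos hP] at h2
  exact h2.symm

lemma c9_split_aux {P Q f : ℤ} (hP : 0 < P) (hQ : 0 < Q) (h : IsCoprime P Q)
    (e : P * Q = 27 * f ^ 4) (h3 : 3 ∣ P) :
    ∃ a b : ℤ, P = 27 * a ^ 4 ∧ Q = b ^ 4 ∧ f ^ 2 = (a * b) ^ 2 := by
  have c3 : IsCoprime (3 : ℤ) Q := h.of_isCoprime_of_dvd_left h3
  have c27 : IsCoprime (27 : ℤ) Q := by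
    have := c3.pow_left (m := 3)
    norm_num at this; exact this
  obtain ⟨R, rfl⟩ := c27.dvd_of_dvd_mul_right ⟨f ^ 4, e⟩
  have e' : R * Q = f ^ 4 := by linarith
  have hR : 0 < R := by linarith
  have c : IsCoprime R Q := h.of_isCoprime_of_dvd_left ⟨27, by ring⟩
  obtain ⟨a, ha0, ha⟩ := c9_pow_of_mul hR c e'
  obtain ⟨b, hb0, hb⟩ := c9_pow_of_mul hQ c.symm (by rw [mul_comm]; exact e')
  refine ⟨a, b, by rw [ha], hb, ?_⟩
  have : (f ^ 2) ^ 2 = ((a * b) ^ 2) ^ 2 := by rw [ha, hb] at e'; linarith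
  exact (sq_eq_sq₀ (sq_nonneg _) (sq_nonneg _)).1 this

lemma c9_split {P Q f : ℤ} (hP : 0 < P) (hQ : 0 < Q) (h : IsCoprime P Q)
    (e : P * Q = 27 * f ^ 4) :
    ∃ a b : ℤ, f ^ 2 = (a * b) ^ 2 ∧
      ((P = 27 * a ^ 4 ∧ Q = b ^ 4) ∨ (Q = 27 * a ^ 4 ∧ P = b ^ 4)) := by
  have h3 : (3 : ℤ) ∣ P * Q := ⟨9 * f ^ 4, by rw [e]; ring⟩
  rcases Int.prime_three.dvd_or_dvd h3 with h3 | h3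
  · obtain ⟨a, b, h1, h2, h4⟩ := c9_split_aux hP hQ h e h3
    exact ⟨a, b, h4, Or.inl ⟨h1, h2⟩⟩
  · obtain ⟨a, b, h1, h2, h4⟩ := c9_split_aux hQ hP h.symm (by rw [mul_comm]; exact e) h3
    exact ⟨a, b, h4, Or.inr ⟨h1, h2⟩⟩

lemma c9_coprime_of {x y : ℤ} (h : ∀ p : ℤ, Prime p → p ∣ x → p ∣ y → False) (hx : x ≠ 0) :
    IsCoprime x y :=
  isCoprime_of_prime_dvd (by tauto) (fun p hp h1 h2 => h p hp h1 h2)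

lemma c9_dvd_of_27 {p f : ℤ} (hp : Prime p) (h : p ∣ 27 * f ^ 4) : p ∣ 3 ∨ p ∣ f := by
  rcases hp.dvd_or_dvd h with h | h
  · left
    have : p ∣ 3 ^ 3 := by norm_num; exact h
    exact hp.dvd_of_dvd_pow this
  · right; exact hp.dvd_of_dvd_pow h

lemma c9_not_prime {p x y : ℤ} (hp : Prime p) (h : IsCoprime x y) (h1 : p ∣ x) (h2 : p ∣ y) :
    False := hp.not_unit (h.isUnit_of_dvd' h1 h2)

lemma c9_descentB {a b M : ℤ} (hc : IsCoprime a b) (h3 : ¬ (3 : ℤ) ∣ b) (ha : a ≠ 0)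
    (hM : Odd M) (h : M ^ 2 = b ^ 4 - 18 * a ^ 2 * b ^ 2 - 27 * a ^ 4) :
    ∃ c d : ℤ, a ^ 2 = (d * c) ^ 2 ∧ b ^ 2 = c ^ 4 + 9 * c ^ 2 * d ^ 2 + 27 * d ^ 4 := by
  have hodd : Odd (b ^ 2 - 9 * a ^ 2) := by
    have h5 : Odd (M ^ 2) := hM.pow
    have : (b ^ 2 - 9 * a ^ 2) ^ 2 = M ^ 2 + 2 * (54 * a ^ 4) := by rw [h]; ring
    have h6 : Odd ((b ^ 2 - 9 * a ^ 2) ^ 2) := by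
      rw [this]; exact h5.add_even (even_two_mul _)
    exact (Int.odd_pow' two_ne_zero).1 h6
  obtain ⟨P, hP⟩ := (hodd.sub_odd hM)
  have hs : ∃ Q, P + Q = b ^ 2 - 9 * a ^ 2 ∧ P * Q = 27 * a ^ 4 := by
    refine ⟨b ^ 2 - 9 * a ^ 2 - P, by ring, ?_⟩
    have hMe : M = b ^ 2 - 9 * a ^ 2 - (P + P) := by linarith
    rw [hMe] at h
    linarith
  obtain ⟨Q, hs, hpq⟩ := hs
  have ha4 : 0 < a ^ 4 := by positivity
  have hpos : 0 < P * Q := by rw [hpq]; linarith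
  have hco : IsCoprime P Q := by
    apply c9_coprime_of
    · intro p hp h1 h2
      have h5 : p ∣ b ^ 2 - 9 * a ^ 2 := hs ▸ dvd_add h1 h2
      rcases c9_dvd_of_27 hp (hpq ▸ h1.mul_right Q) with h6 | h6
      · have : p ∣ b ^ 2 := by
          have := dvd_add h5 (h6.mul_right (3 * a ^ 2))
          ring_nf at this; exact this
        have hb := hp.dvd_of_dvd_pow this
        have h7 : Associated p 3 := hp.associated_of_dvd Int.prime_three h6
        exact h3 (h7.symm.dvd.trans hb)
      · have : p ∣ b ^ 2 := by
          have := dvd_add h5 (h6.mul_right (9 * a))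
          ring_nf at this; exact this
        exact c9_not_prime hp hc h6 (hp.dvd_of_dvd_pow this)
    · rintro rfl; simp at hpos
  rcases pos_and_pos_or_neg_and_neg_of_mul_pos hpos with ⟨p1, p2⟩ | ⟨p1, p2⟩
  · obtain ⟨d, c, e1, ⟨e2, e3⟩ | ⟨e2, e3⟩⟩ := c9_split p1 p2 hco hpq
    all_goals
      refine ⟨c, d, e1, ?_⟩
      rw [e2, e3] at hs
      rw [e1] at hs
      linarith
  · exfalso
    obtain ⟨d, c, e1, ⟨e2, e3⟩ | ⟨e2, e3⟩⟩ :=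
      c9_split (P := -P) (Q := -Q) (f := a) (by linarith) (by linarith) hco.neg_neg
        (by linarith)
    all_goals
      have hs' : b ^ 2 + (c ^ 4 - 9 * c ^ 2 * d ^ 2 + 27 * d ^ 4) = 0 := by
        rw [e1] at hs; linarith
      have hd : d ≠ 0 := by rintro rfl; simp at e1; exact ha e1
      have : 0 < d ^ 4 := by positivity
      nlinarith [sq_nonneg (2 * c ^ 2 - 9 * d ^ 2), sq_nonneg b]

lemma c9_quartic (n : ℕ) : ∀ e M N : ℤ, e.natAbs = n → IsCoprime M e → e ≠ 0 →
    N ^ 2 = M ^ 4 + 9 * M ^ 2 * e ^ 2 + 27 * e ^ 4 → False := by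
  induction n using Nat.strong_induction_on with
  | _ n ih =>
  intro e M N hn hc he h
  wlog hN : 0 ≤ N generalizing N
  · exact this (-N) (by rw [neg_sq]; exact h) (by linarith)
  have h3M : ¬ (3 : ℤ) ∣ M := by
    rintro ⟨m, rfl⟩
    have h1 : (3 : ℤ) ∣ N ^ 2 := ⟨27 * m ^ 4 + 27 * m ^ 2 * e ^ 2 + 9 * e ^ 4, by rw [h]; ring⟩
    obtain ⟨n1, rfl⟩ := Int.prime_three.dvd_of_dvd_pow h1
    have h2 : n1 ^ 2 = 9 * m ^ 4 + 9 * m ^ 2 * e ^ 2 + 3 * e ^ 4 := by linarith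
    have h1 : (3 : ℤ) ∣ n1 ^ 2 := ⟨3 * m ^ 4 + 3 * m ^ 2 * e ^ 2 + e ^ 4, by rw [h2]; ring⟩
    obtain ⟨n2, rfl⟩ := Int.prime_three.dvd_of_dvd_pow h1
    have h1 : (3 : ℤ) ∣ e ^ 4 := ⟨n2 ^ 2 - m ^ 4 - m ^ 2 * e ^ 2, by linarith⟩
    exact c9_not_prime Int.prime_three hc (dvd_mul_right _ _) (Int.prime_three.dvd_of_dvd_pow h1)
  have par : Even e ∧ Odd M := by
    have key : ∀ x y z : ZMod 8, z ^ 2 = x ^ 4 + 9 * x ^ 2 * y ^ 2 + 27 * y ^ 4 →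
      4 * y = 0 := by decide
    have h8 := congrArg (Int.cast : ℤ → ZMod 8) h
    push_cast at h8
    have h9 := key _ _ _ h8
    have h10 : ((4 * e : ℤ) : ZMod 8) = 0 := by push_cast; exact h9
    rw [ZMod.intCast_zmod_eq_zero_iff_dvd] at h10
    have he2 : Even e := by rw [Int.even_iff]; push_cast at h10; omega
    refine ⟨he2, ?_⟩
    rw [← Int.not_even_iff_odd]
    intro hM
    exact c9_not_prime Int.prime_two hc hM.two_dvd he2.two_dvd
  obtain ⟨hee, hM⟩ := par
  obtain ⟨f, hf⟩ := hee
  have hf' : e = 2 * f := by linarith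
  subst hf'
  have hf0 : f ≠ 0 := by rintro rfl; simp at he
  have hc' : IsCoprime M f := hc.of_isCoprime_of_dvd_right (dvd_mul_left _ _)
  have hN2 : N ^ 2 = (M ^ 2 + 18 * f ^ 2) ^ 2 + 108 * f ^ 4 := by rw [h]; ring
  have hoK : Odd (M ^ 2 + 18 * f ^ 2) := hM.pow.add_even ⟨9 * f ^ 2, by ring⟩
  have hoN : Odd N := by
    have : Odd (N ^ 2) := by rw [hN2]; exact hoK.pow.add_even ⟨54 * f ^ 4, by ring⟩
    exact (Int.odd_pow' two_ne_zero).1 this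
  obtain ⟨P, hP⟩ := hoN.sub_odd hoK
  obtain ⟨Q, hQ⟩ : ∃ Q, Q - P = M ^ 2 + 18 * f ^ 2 := ⟨P + (M ^ 2 + 18 * f ^ 2), by ring⟩
  have hNPQ : N = P + Q := by linarith
  have hpq : P * Q = 27 * f ^ 4 := by
    rw [← hQ, hNPQ] at hN2; linarith
  have hf4 : 0 < f ^ 4 := by positivity
  have hpos : 0 < P * Q := by rw [hpq]; linarith
  have hco : IsCoprime P Q := by
    apply c9_coprime_of
    · intro p hp h1 h2
      have h5 : p ∣ M ^ 2 + 18 * f ^ 2 := hQ ▸ dvd_sub h2 h1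
      rcases c9_dvd_of_27 hp (hpq ▸ h1.mul_right Q) with h6 | h6
      · have : p ∣ M ^ 2 := by
          have := dvd_sub h5 (h6.mul_right (6 * f ^ 2))
          ring_nf at this; exact this
        have hb := hp.dvd_of_dvd_pow this
        have h7 : Associated p 3 := hp.associated_of_dvd Int.prime_three h6
        exact h3M (h7.symm.dvd.trans hb)
      · have : p ∣ M ^ 2 := by
          have := dvd_sub h5 (h6.mul_right (18 * f))
          ring_nf at this; exact this
        exact c9_not_prime hp hc' (hp.dvd_of_dvd_pow this) h6
    · rintro rfl; simp at hpos
  obtain ⟨p1, p2⟩ : 0 < P ∧ 0 < Q := by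
    rcases pos_and_pos_or_neg_and_neg_of_mul_pos hpos with hh | ⟨p1, p2⟩
    · exact hh
    · linarith
  obtain ⟨a, b, e1, ⟨e2, e3⟩ | ⟨e2, e3⟩⟩ := c9_split p1 p2 hco hpq
  · have hB : M ^ 2 = b ^ 4 - 18 * a ^ 2 * b ^ 2 - 27 * a ^ 4 := by
      rw [e1] at hQ; linarith
    have ha0 : a ≠ 0 := by rintro rfl; simp at e1; exact hf0 e1
    have hb0 : b ≠ 0 := by rintro rfl; simp at e1; exact hf0 e1
    have hab : IsCoprime a b := by
      refine c9_coprime_of (fun p hp h1 h2 => ?_) ha0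
      exact c9_not_prime hp hco (e2 ▸ (dvd_pow h1 (by norm_num)).mul_left _)
        (e3 ▸ dvd_pow h2 (by norm_num))
    have hb3 : ¬ (3 : ℤ) ∣ b := by
      intro h2
      exact c9_not_prime Int.prime_three hco (e2 ▸ ⟨9 * a ^ 4, by ring⟩)
        (e3 ▸ dvd_pow h2 (by norm_num))
    obtain ⟨c, d, k1, k2⟩ := c9_descentB hab hb3 ha0 hM hB
    have hd0 : d ≠ 0 := by rintro rfl; simp at k1; exact ha0 k1
    have hcd : IsCoprime c d := by
      refine (c9_coprime_of (fun p hp h1 h2 => ?_) hd0).symm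
      refine c9_not_prime hp hab (hp.dvd_of_dvd_pow (n := 2) ?_) (hp.dvd_of_dvd_pow (n := 2) ?_)
      · rw [k1]; exact dvd_pow (h1.mul_right _) two_ne_zero
      · rw [k2]
        exact dvd_add (dvd_add (dvd_pow h2 (by norm_num))
          ((dvd_pow h1 (by norm_num)).mul_left _)) ((dvd_pow h1 (by norm_num)).mul_left _)
    have k3 : d.natAbs ∣ f.natAbs := by
      rw [Int.natAbs_dvd_natAbs]
      have j1 : d ∣ a := (Int.pow_dvd_pow_iff two_ne_zero).1 ⟨c ^ 2, by rw [k1]; ring⟩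
      have j2 : a ∣ f := (Int.pow_dvd_pow_iff two_ne_zero).1 ⟨b ^ 2, by rw [e1]; ring⟩
      exact j1.trans j2
    have k4 := Nat.le_of_dvd (by omega) k3
    exact ih d.natAbs (by omega) d c b rfl hcd hd0 k2
  · have hB : M ^ 2 = 27 * a ^ 4 - 18 * a ^ 2 * b ^ 2 - b ^ 4 := by
      rw [e1] at hQ; linarith
    have key : ∀ x y : ZMod 3, x ^ 2 = - y ^ 4 → x = 0 := by decide
    have h8 := congrArg (Int.cast : ℤ → ZMod 3) hB
    push_cast at h8
    have t1 : (27 : ZMod 3) = 0 := by decide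
    have t2 : (18 : ZMod 3) = 0 := by decide
    rw [t1, t2] at h8
    have h9 := key (M : ZMod 3) b (by rw [h8]; ring)
    rw [ZMod.intCast_zmod_eq_zero_iff_dvd] at h9
    exact h3M h9

lemma c9_quartic' {e M N : ℤ} (hc : IsCoprime M e) (he : e ≠ 0)
    (h : N ^ 2 = M ^ 4 + 9 * M ^ 2 * e ^ 2 + 27 * e ^ 4) : False :=
  c9_quartic _ e M N rfl hc he h

lemma c9_int {m n Y : ℤ} (hm : 0 < m) (hn : 0 < n) (hc : IsCoprime m n)
    (h : n * (m * (m ^ 2 + 9 * m * n + 27 * n ^ 2)) = Y ^ 2) : False := by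
  have c1 : IsCoprime n (m * (m ^ 2 + 9 * m * n + 27 * n ^ 2)) := by
    refine c9_coprime_of (fun p hp h1 h2 => ?_) hn.ne'
    rcases hp.dvd_or_dvd h2 with h2 | h2
    · exact c9_not_prime hp hc h2 h1
    · have : p ∣ m ^ 2 := by
        have := dvd_sub h2 (h1.mul_right (9 * m + 27 * n))
        ring_nf at this; exact this
      exact c9_not_prime hp hc (hp.dvd_of_dvd_pow this) h1
  obtain ⟨e, -, rfl⟩ := c9_pow_of_mul hn c1 h
  have hpos : 0 < m * (m ^ 2 + 9 * m * e ^ 2 + 27 * (e ^ 2) ^ 2) := by positivity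
  obtain ⟨Z, -, hZ⟩ := c9_pow_of_mul hpos c1.symm (by rw [mul_comm]; exact h)
  have he : e ≠ 0 := by rintro rfl; simp at hn
  have hme : IsCoprime m e := hc.of_isCoprime_of_dvd_right (dvd_pow_self _ two_ne_zero)
  by_cases h3 : (3 : ℤ) ∣ m
  · obtain ⟨k, rfl⟩ := h3
    have h3e : ¬ (3 : ℤ) ∣ e := fun h =>
      c9_not_prime Int.prime_three hme (dvd_mul_right _ _) h
    have hke : IsCoprime k e := hme.of_isCoprime_of_dvd_left (dvd_mul_left _ _)
    have d1 : (3 : ℤ) ∣ Z := Int.prime_three.dvd_of_dvd_pow (n := 2)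
      ⟨k * ((3 * k) ^ 2 + 9 * (3 * k) * e ^ 2 + 27 * (e ^ 2) ^ 2), by rw [← hZ]; ring⟩
    obtain ⟨Z, rfl⟩ := d1
    have hZ1 : 3 * (k * (k ^ 2 + 3 * k * e ^ 2 + 3 * e ^ 4)) = Z ^ 2 := by linarith
    obtain ⟨Z, rfl⟩ : (3 : ℤ) ∣ Z := Int.prime_three.dvd_of_dvd_pow (n := 2) ⟨_, hZ1.symm⟩
    have hZ2 : k * (k ^ 2 + 3 * k * e ^ 2 + 3 * e ^ 4) = 3 * Z ^ 2 := by linarith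
    have hk : (3 : ℤ) ∣ k := Int.prime_three.dvd_of_dvd_pow (n := 3)
      ⟨Z ^ 2 - k ^ 2 * e ^ 2 - k * e ^ 4, by linarith⟩
    obtain ⟨j, rfl⟩ := hk
    have hZ3 : 3 * j * (3 * j ^ 2 + 3 * j * e ^ 2 + e ^ 4) = Z ^ 2 := by linarith
    have hj : 0 < j := by linarith
    have hje : IsCoprime j e := hke.of_isCoprime_of_dvd_left (dvd_mul_left _ _)
    have c2 : IsCoprime (3 * j) (3 * j ^ 2 + 3 * j * e ^ 2 + e ^ 4) := by
      refine c9_coprime_of (fun p hp h1 h2 => ?_) (by positivity)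
      have : p ∣ e ^ 4 := by
        have := dvd_sub h2 (h1.mul_right (j + e ^ 2))
        ring_nf at this; exact this
      have h4 := hp.dvd_of_dvd_pow this
      exact c9_not_prime hp hke h1 h4
    obtain ⟨w, -, hw⟩ := c9_pow_of_mul (by positivity) c2 hZ3
    obtain ⟨N, -, hN⟩ := c9_pow_of_mul (by positivity) c2.symm (by rw [mul_comm]; exact hZ3)
    obtain ⟨i, rfl⟩ : (3 : ℤ) ∣ w := Int.prime_three.dvd_of_dvd_pow (n := 2) ⟨j, hw.symm⟩
    have hji : j = 3 * i ^ 2 := by linarith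
    subst hji
    have hi : i ≠ 0 := by rintro rfl; simp at hj
    refine c9_quartic' (e := i) (M := e) (N := N) ?_ hi (by rw [← hN]; ring)
    exact (hje.of_isCoprime_of_dvd_left ⟨3 * i, by ring⟩).symm
  · have c2 : IsCoprime m (m ^ 2 + 9 * m * e ^ 2 + 27 * (e ^ 2) ^ 2) := by
      refine c9_coprime_of (fun p hp h1 h2 => ?_) hm.ne'
      have : p ∣ 27 * e ^ 4 := by
        have := dvd_sub h2 (h1.mul_right (m + 9 * e ^ 2))
        ring_nf at this; rw [mul_comm]; exact this
      rcases c9_dvd_of_27 hp this with h6 | h6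
      · exact h3 ((hp.associated_of_dvd Int.prime_three h6).symm.dvd.trans h1)
      · exact c9_not_prime hp hme h1 h6
    obtain ⟨M, -, rfl⟩ := c9_pow_of_mul hm c2 hZ
    obtain ⟨N, -, hN⟩ := c9_pow_of_mul (by positivity) c2.symm (by rw [mul_comm]; exact hZ)
    refine c9_quartic' (e := e) (M := M) (N := N) ?_ he (by rw [← hN]; ring)
    exact hme.of_isCoprime_of_dvd_left (dvd_pow_self _ two_ne_zero)

/-- The elliptic curve `C₉ : y² = x³ - 27` over `ℚ` has exactly one affine rational point,
namely `(3, 0)`. -/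
theorem C9_rational_points :
    {p : ℚ × ℚ | p.2 ^ 2 = p.1 ^ 3 - 27} = {(3, 0)} := by
  ext ⟨x, y⟩
  simp only [Set.mem_setOf_eq, Set.mem_singleton_iff, Prod.mk.injEq]
  constructor
  · intro h
    obtain ⟨u, rfl⟩ : ∃ u, x = u + 3 := ⟨x - 3, by ring⟩
    have h' : y ^ 2 = u * (u ^ 2 + 9 * u + 27) := by rw [h]; ring
    by_cases hu : u = 0
    · subst hu
      simp at h'
      exact ⟨by norm_num, h'⟩
    exfalso
    have hu0 : 0 < u := by
      have h1 : 0 < u ^ 2 + 9 * u + 27 := by nlinarith [sq_nonneg (2 * u + 9)]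
      have h2 : 0 ≤ u * (u ^ 2 + 9 * u + 27) := h' ▸ sq_nonneg y
      exact lt_of_le_of_ne (nonneg_of_mul_nonneg_left h2 h1) (Ne.symm hu)
    have hd0 : (u.den : ℚ) ≠ 0 := by exact_mod_cast u.den_ne_zero
    have hud : u * u.den = u.num := Rat.mul_den_eq_num u
    have hsq : (y * (u.den : ℚ) ^ 2) ^ 2 =
        ((u.den * (u.num * (u.num ^ 2 + 9 * u.num * u.den + 27 * u.den ^ 2)) : ℤ) : ℚ) := by
      push_cast
      rw [← hud, mul_pow, h']; ring
    have hS : IsSquare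
        ((u.den * (u.num * (u.num ^ 2 + 9 * u.num * u.den + 27 * u.den ^ 2)) : ℤ) : ℚ) :=
      ⟨y * (u.den : ℚ) ^ 2, by rw [← hsq]; ring⟩
    rw [Rat.isSquare_intCast_iff] at hS
    obtain ⟨Y, hY⟩ := hS
    refine c9_int (m := u.num) (n := u.den) (Y := Y) (Rat.num_pos.2 hu0)
      (by exact_mod_cast u.den_pos) ?_ (by rw [hY]; ring)
    exact Rat.isCoprime_num_den u
  · rintro ⟨rfl, rfl⟩
    norm_num
end

section
/- The genus-one curve C₁₂ : y² = (x²−1)(x²−9) over ℚ has exactly six affine rational points: (0, 3), (0, −3), (3, 0), (−3, 0), (1, 0), and (−1, 0). -/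
/-- Separation of the two quadratic forms in the descent step. -/
theorem c12_key (s t r k : ℤ) (hst : IsCoprime s t) (hrk : IsCoprime r k) (hs : s ≠ 0)
    (h : s ^ 2 * (4 * r ^ 2 + k ^ 2) = t ^ 2 * (r ^ 2 + k ^ 2)) :
    k ^ 2 + r ^ 2 = s ^ 2 ∧ k ^ 2 + 4 * r ^ 2 = t ^ 2 := by
  have h1 : s ^ 2 ∣ r ^ 2 + k ^ 2 :=
    (IsCoprime.pow (m := 2) (n := 2) hst).dvd_of_dvd_mul_left ⟨_, h.symm⟩
  obtain ⟨c, hc⟩ := h1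
  have hs2 : s ^ 2 ≠ 0 := pow_ne_zero 2 hs
  have hc2 : 4 * r ^ 2 + k ^ 2 = t ^ 2 * c := by
    apply mul_left_cancel₀ hs2
    rw [h, hc]; ring
  have hc3 : c ∣ 3 := by
    obtain ⟨x, y, hxy⟩ := IsCoprime.pow (m := 2) (n := 2) hrk
    refine ⟨x * (t ^ 2 - s ^ 2) + y * (4 * s ^ 2 - t ^ 2), ?_⟩
    linear_combination (-3) * hxy + (-x + 4 * y) * hc + (x - y) * hc2
  have hcpos : 0 < c := by
    have hsp : 0 < s ^ 2 := by positivity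
    have : 0 ≤ s ^ 2 * c := by rw [← hc]; positivity
    have h0 : 0 ≤ c := nonneg_of_mul_nonneg_right this hsp
    rcases h0.lt_or_eq with h0 | h0
    · exact h0
    · subst h0; norm_num at hc3
  have hcle : c ≤ 3 := Int.le_of_dvd (by norm_num) hc3
  interval_cases c
  · constructor <;> linarith
  · norm_num at hc3
  · exfalso
    have hm : (r ^ 2 + k ^ 2) % 3 = 0 := by rw [hc]; simp
    have hr : r % 3 = 0 ∧ k % 3 = 0 := by
      have h1 : r % 3 = 0 ∨ r % 3 = 1 ∨ r % 3 = 2 := by omega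
      have h2 : k % 3 = 0 ∨ k % 3 = 1 ∨ k % 3 = 2 := by omega
      rcases h1 with h1 | h1 | h1 <;> rcases h2 with h2 | h2 | h2 <;>
        simp [pow_two, Int.add_emod, Int.mul_emod, h1, h2] at hm ⊢
    have := hrk.isUnit_of_dvd' (Int.dvd_of_emod_eq_zero hr.1) (Int.dvd_of_emod_eq_zero hr.2)
    rw [Int.isUnit_iff] at this
    omega

theorem c12_factor (p q m n : ℤ) (hp : p ≠ 0) (h : p * q = m * n) :
    ∃ r s t k : ℤ, p = r * s ∧ q = t * k ∧ m = r * t ∧ n = s * k := by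
  obtain ⟨r, s, ⟨t, ht⟩, ⟨k, hk⟩, hpr⟩ := exists_dvd_and_dvd_of_dvd_mul (Dvd.intro q h)
  refine ⟨r, s, t, k, hpr, ?_, ht, hk⟩
  apply mul_left_cancel₀ hp
  rw [h, ht, hk, hpr]; ring

theorem c12_pyth (a b u : ℤ) (h : a ^ 2 + b ^ 2 = u ^ 2) (hab : IsCoprime a b)
    (ha : a % 2 = 1) : ∃ m n : ℤ, a = m ^ 2 - n ^ 2 ∧ b = 2 * m * n ∧ IsCoprime m n ∧
      (m % 2 = 0 ∧ n % 2 = 1 ∨ m % 2 = 1 ∧ n % 2 = 0) := by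
  have hu : 0 < |u| := by
    rw [abs_pos]; rintro rfl
    have : a = 0 := by nlinarith [sq_nonneg a, sq_nonneg b]
    omega
  have hP : PythagoreanTriple a b |u| := by
    unfold PythagoreanTriple
    rw [abs_mul_abs_self]; linarith
  obtain ⟨m, n, h1, h2, -, h4, h5, -⟩ :=
    hP.coprime_classification' (Int.isCoprime_iff_gcd_eq_one.mp hab) ha hu
  exact ⟨m, n, h1, h2, Int.isCoprime_iff_gcd_eq_one.mpr h4, h5⟩

theorem c12_descent (N : ℕ) : ∀ a b u v : ℤ, (a * b).natAbs = N → IsCoprime a b →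
    a ^ 2 + b ^ 2 = u ^ 2 → a ^ 2 + 4 * b ^ 2 = v ^ 2 → a * b = 0 := by
  induction N using Nat.strong_induction_on with
  | _ N ih =>
  intro a b u v hN hab hu hv
  by_contra hne
  have ha0 : a ≠ 0 := left_ne_zero_of_mul hne
  have hb0 : b ≠ 0 := right_ne_zero_of_mul hne
  rcases Int.emod_two_eq_zero_or_one a with ha | ha
  · obtain ⟨a', rfl⟩ := Int.dvd_of_emod_eq_zero ha
    have hv2 : (2 : ℤ) ∣ v := by
      apply Int.prime_two.dvd_of_dvd_pow (n := 2)
      exact ⟨2 * a' ^ 2 + 2 * b ^ 2, by rw [← hv]; ring⟩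
    obtain ⟨w, rfl⟩ := hv2
    have hlt : (b * a').natAbs < N := by
      rw [← hN, Int.natAbs_mul, Int.natAbs_mul, Int.natAbs_mul]
      have h1 : 0 < a'.natAbs := Int.natAbs_pos.mpr (by rintro rfl; simp at ha0)
      have h2 : 0 < b.natAbs := Int.natAbs_pos.mpr hb0
      have := Nat.mul_pos h1 h2
      have h22 : (2 : ℤ).natAbs = 2 := rfl
      rw [h22]
      nlinarith
    have := ih _ hlt b a' w u rfl (hab.of_mul_left_right.symm) (by linarith) (by linarith)
    apply hne
    linear_combination 2 * this
  · obtain ⟨m, n, h1, h2, hmn, -⟩ := c12_pyth a b u hu hab ha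
    have ha2 : IsCoprime a 2 := by
      refine ⟨1, -(a / 2), ?_⟩
      omega
    obtain ⟨p, q, h3, h4, hpq, hpar⟩ := c12_pyth a (2 * b) v (by linarith)
      (ha2.mul_right hab) ha
    have hb : b = p * q := by linarith
    -- a smaller solution
    have fin : ∀ r s t k : ℤ, b = 2 * (r * s * t * k) → IsCoprime s t → IsCoprime r k →
        s ^ 2 * (4 * r ^ 2 + k ^ 2) = t ^ 2 * (r ^ 2 + k ^ 2) → False := by
      intro r s t k hbr hst hrk he
      have hs : s ≠ 0 := by rintro rfl; simp at hbr; exact hb0 hbr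
      have ht : t ≠ 0 := by rintro rfl; simp at hbr; exact hb0 hbr
      have hr : r ≠ 0 := by rintro rfl; simp at hbr; exact hb0 hbr
      have hk : k ≠ 0 := by rintro rfl; simp at hbr; exact hb0 hbr
      obtain ⟨e1, e2⟩ := c12_key s t r k hst hrk hs he
      have hkr : k * r ≠ 0 := mul_ne_zero hk hr
      have hlt : (k * r).natAbs < N := by
        have e : a * b = (k * r) * (2 * (s * t * a)) := by rw [hbr]; ring
        rw [← hN, e, Int.natAbs_mul (k * r), Int.natAbs_mul 2]
        have h1 : 0 < (k * r).natAbs := Int.natAbs_pos.mpr hkr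
        have h2 : 0 < (s * t * a).natAbs :=
          Int.natAbs_pos.mpr (mul_ne_zero (mul_ne_zero hs ht) ha0)
        have := Nat.mul_pos h1 h2
        have h22 : (2 : ℤ).natAbs = 2 := rfl
        rw [h22]
        nlinarith
      exact hkr (ih _ hlt k r s t rfl hrk.symm e1 e2)
    rcases hpar with ⟨hp, -⟩ | ⟨-, hq⟩
    · obtain ⟨p', rfl⟩ := Int.dvd_of_emod_eq_zero hp
      obtain ⟨r, s, t, k, rfl, rfl, rfl, rfl⟩ := c12_factor p' q m n
        (by rintro rfl; simp at hb; exact hb0 hb) (by linarith)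
      exact fin r s t k (by rw [hb]; ring)
        (hpq.of_mul_left_right.of_mul_left_right.of_mul_right_left)
        (hmn.of_mul_left_left.of_mul_right_right) (by linear_combination h1 - h3)
    · obtain ⟨q', rfl⟩ := Int.dvd_of_emod_eq_zero hq
      obtain ⟨r, s, t, k, rfl, rfl, rfl, rfl⟩ := c12_factor q' p m n
        (by rintro rfl; simp at hb; exact hb0 hb) (by linarith)
      exact fin s r k t (by rw [hb]; ring)
        (hpq.of_mul_left_right.of_mul_right_right.of_mul_right_left.symm)
        (hmn.of_mul_left_right.of_mul_right_left.symm) (by linear_combination h3 - h1)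

theorem c12_int (a b u v : ℤ) (hu : a ^ 2 + b ^ 2 = u ^ 2) (hv : a ^ 2 + 4 * b ^ 2 = v ^ 2) :
    a * b = 0 := by
  by_cases hg : Int.gcd a b = 0
  · rw [Int.gcd_eq_zero_iff] at hg; simp [hg.1]
  obtain ⟨a', b', hc, ha, hb⟩ := Int.exists_gcd_one (Nat.pos_of_ne_zero hg)
  set g : ℤ := (Int.gcd a b : ℤ) with hgdef
  have hg0 : g ≠ 0 := by rw [hgdef]; exact_mod_cast hg
  have hgu : g ∣ u := by
    rw [← Int.pow_dvd_pow_iff (n := 2) (by norm_num)]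
    exact ⟨a' ^ 2 + b' ^ 2, by rw [← hu, ha, hb]; ring⟩
  have hgv : g ∣ v := by
    rw [← Int.pow_dvd_pow_iff (n := 2) (by norm_num)]
    exact ⟨a' ^ 2 + 4 * b' ^ 2, by rw [← hv, ha, hb]; ring⟩
  obtain ⟨u', hu'⟩ := hgu
  obtain ⟨v', hv'⟩ := hgv
  have := c12_descent _ a' b' u' v' rfl (Int.isCoprime_iff_gcd_eq_one.mpr hc)
    (by
      apply mul_left_cancel₀ (pow_ne_zero 2 hg0)
      rw [ha, hb, hu'] at hu
      linear_combination hu)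
    (by
      apply mul_left_cancel₀ (pow_ne_zero 2 hg0)
      rw [ha, hb, hv'] at hv
      linear_combination hv)
  rw [ha, hb]
  linear_combination g ^ 2 * this

theorem c12_rat (a b u v : ℚ) (hu : a ^ 2 + b ^ 2 = u ^ 2) (hv : a ^ 2 + 4 * b ^ 2 = v ^ 2) :
    a * b = 0 := by
  have e : ∀ x : ℚ, x * x.den = x.num := fun x => Rat.mul_den_eq_num x
  have ea := e a
  have eb := e b
  have eu := e u
  have ev := e v
  have key := c12_int (a.num * (b.den * u.den * v.den)) (b.num * (a.den * u.den * v.den))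
    (u.num * (a.den * b.den * v.den)) (v.num * (a.den * b.den * u.den))
    (by
      have : ((a.num : ℚ) * (b.den * u.den * v.den)) ^ 2 +
          ((b.num : ℚ) * (a.den * u.den * v.den)) ^ 2 =
          ((u.num : ℚ) * (a.den * b.den * v.den)) ^ 2 := by
        rw [← ea, ← eb, ← eu]
        linear_combination ((a.den : ℚ) * b.den * u.den * v.den) ^ 2 * hu
      exact_mod_cast this)
    (by
      have : ((a.num : ℚ) * (b.den * u.den * v.den)) ^ 2 +
          4 * ((b.num : ℚ) * (a.den * u.den * v.den)) ^ 2 =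
          ((v.num : ℚ) * (a.den * b.den * u.den)) ^ 2 := by
        rw [← ea, ← eb, ← ev]
        linear_combination ((a.den : ℚ) * b.den * u.den * v.den) ^ 2 * hv
      exact_mod_cast this)
  have ha := a.den_ne_zero
  have hb := b.den_ne_zero
  have hu' := u.den_ne_zero
  have hv' := v.den_ne_zero
  simpa [ha, hb, hu', hv'] using key

/-- The genus-one curve `C₁₂ : y² = (x²-1)(x²-9)` over `ℚ` has exactly six affine rational
points. -/
theorem C12_rational_points :
    {p : ℚ × ℚ | p.2 ^ 2 = (p.1 ^ 2 - 1) * (p.1 ^ 2 - 9)} =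
      {(0, 3), (0, -3), (3, 0), (-3, 0), (1, 0), (-1, 0)} := by
  ext ⟨x, y⟩
  simp only [Set.mem_ofPred_eq, Set.mem_insert_iff, Set.mem_singleton_iff, Prod.mk.injEq]
  constructor
  · intro h
    have h0 : y * (2 * x) = 0 := c12_rat y (2 * x) (x ^ 2 - 3) (x ^ 2 + 3)
      (by linear_combination h) (by linear_combination h)
    rcases mul_eq_zero.mp h0 with rfl | hx
    · have : (x - 1) * ((x + 1) * ((x - 3) * (x + 3))) = 0 := by linear_combination -h
      rcases mul_eq_zero.mp this with h | h
      · have : x = 1 := by linarith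
        simp [this]
      rcases mul_eq_zero.mp h with h | h
      · have : x = -1 := by linarith
        simp [this]
      rcases mul_eq_zero.mp h with h | h
      · have : x = 3 := by linarith
        simp [this]
      · have : x = -3 := by linarith
        simp [this]
    · have hx : x = 0 := by linarith
      subst hx
      have : (y - 3) * (y + 3) = 0 := by linear_combination h
      rcases mul_eq_zero.mp this with h | h
      · have : y = 3 := by linarith
        simp [this]
      · have : y = -3 := by linarith
        simp [this]
  · rintro (⟨rfl, rfl⟩ | ⟨rfl, rfl⟩ | ⟨rfl, rfl⟩ | ⟨rfl, rfl⟩ | ⟨rfl, rfl⟩ | ⟨rfl, rfl⟩) <;> norm_num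
end

section
/- The set of affine rational points on the curve X₆ = {(h, y, z) ∈ ℚ³ : y² = h(h+8), z² = h+9} is exactly {(−9, 3, 0), (−9, −3, 0), (−8, 0, 1), (−8, 0, −1), (0, 0, 3), (0, 0, −3)}. -/
lemma x6_no_common {a b p : ℤ} (h : IsCoprime a b) (hp : Prime p) (ha : p ∣ a) (hb : p ∣ b) :
    False := hp.not_isUnit (h.isUnit_of_dvd' ha hb)

lemma x6_coprime_AB {a d : ℤ} (h : IsCoprime a d) :
    IsCoprime (a ^ 2 + d ^ 2) (a ^ 2 + 4 * d ^ 2) := by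
  have key : ∀ p : ℤ, Prime p → p ∣ a ^ 2 + d ^ 2 → p ∣ a ^ 2 + 4 * d ^ 2 → False := by
    intro p hp h1 h2
    have h3 : p ∣ 3 * d ^ 2 := by
      have := dvd_sub h2 h1
      exact this.trans (dvd_of_eq (by ring))
    rcases hp.dvd_or_dvd h3 with h4 | h4
    · have h5 : (3 : ℤ) ∣ p := ((hp.dvd_prime_iff_associated Int.prime_three).1 h4).symm.dvd
      have h6 : (3 : ℤ) ∣ a ^ 2 + d ^ 2 := h5.trans h1
      have ha : a % 3 = 0 ∨ a % 3 = 1 ∨ a % 3 = 2 := by omega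
      have hd : d % 3 = 0 ∨ d % 3 = 1 ∨ d % 3 = 2 := by omega
      have h7 : (a ^ 2 + d ^ 2) % 3 = 0 := Int.emod_eq_zero_of_dvd h6
      rcases ha with ha | ha | ha <;> rcases hd with hd | hd | hd <;>
        simp [pow_two, Int.add_emod, Int.mul_emod, ha, hd] at h7
      exact x6_no_common h Int.prime_three (Int.dvd_of_emod_eq_zero ha)
        (Int.dvd_of_emod_eq_zero hd)
    · have h5 : p ∣ a ^ 2 := by
        have := dvd_sub h1 h4
        exact this.trans (dvd_of_eq (by ring))
      exact x6_no_common h hp (hp.dvd_of_dvd_pow h5) (hp.dvd_of_dvd_pow h4)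
  refine isCoprime_of_prime_dvd ?_ ?_
  · rintro ⟨h1, h2⟩
    exact key 2 Int.prime_two (by rw [h1]; simp) (by rw [h2]; simp)
  · intro p hp h1 h2
    exact key p hp h1 h2

lemma x6_step {p q P Q : ℤ} (hpq : IsCoprime p q) (hodd : p % 2 = 1)
    (h1 : P * Q = p * q) (h2 : P ^ 2 - 4 * Q ^ 2 = p ^ 2 - q ^ 2) :
    ∃ a d u v : ℤ, IsCoprime a d ∧ a % 2 = 1 ∧ a ^ 2 + d ^ 2 = u ^ 2 ∧
      a ^ 2 + 4 * d ^ 2 = v ^ 2 ∧ d ∣ q := by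
  have hp0 : p ≠ 0 := by rintro rfl; simp at hodd
  have hg : 0 < Int.gcd p P := Int.gcd_pos_of_ne_zero_left _ hp0
  obtain ⟨b, c, hbc, hb, hc⟩ := Int.exists_gcd_one hg
  set a : ℤ := (Int.gcd p P : ℤ) with ha
  have ha0 : a ≠ 0 := by positivity
  have hbc' : IsCoprime b c := Int.isCoprime_iff_gcd_eq_one.2 hbc
  have hb0 : b ≠ 0 := by rintro rfl; simp at hb; exact hp0 hb
  have e1 : c * Q = b * q := by
    apply mul_left_cancel₀ ha0
    rw [hb, hc] at h1
    linear_combination h1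
  obtain ⟨d, hd⟩ : b ∣ Q := hbc'.dvd_of_dvd_mul_left (Dvd.intro _ e1.symm)
  have hq : q = c * d := by
    apply mul_left_cancel₀ hb0
    rw [← e1, hd]; ring
  have had : IsCoprime a d :=
    (hpq.of_isCoprime_of_dvd_left ⟨b, by rw [hb]; ring⟩).of_isCoprime_of_dvd_right ⟨c, by rw [hq]; ring⟩
  have e2 : c ^ 2 * (a ^ 2 + d ^ 2) = b ^ 2 * (a ^ 2 + 4 * d ^ 2) := by
    rw [hq, hd, hb, hc] at h2
    linear_combination h2
  have hAB := x6_coprime_AB had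
  have hsq : IsCoprime (c ^ 2) (b ^ 2) := hbc'.symm.pow
  have f1 : a ^ 2 + d ^ 2 = b ^ 2 := by
    apply Int.dvd_antisymm (by positivity) (by positivity)
    · exact hAB.dvd_of_dvd_mul_right (Dvd.intro_left _ e2)
    · exact hsq.symm.dvd_of_dvd_mul_left (Dvd.intro _ e2.symm)
  have f2 : a ^ 2 + 4 * d ^ 2 = c ^ 2 := by
    apply mul_left_cancel₀ (pow_ne_zero 2 hb0)
    rw [← e2, f1]; ring
  refine ⟨a, d, b, c, had, ?_, f1, f2, ⟨c, by rw [hq]; ring⟩⟩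
  rw [hb] at hodd
  rcases Int.emod_two_eq_zero_or_one a with h | h
  · simp [Int.mul_emod, h] at hodd
  · exact h

lemma x6_sq_mod4 (x : ℤ) : (x % 2 = 0 ∧ x ^ 2 % 4 = 0) ∨ (x % 2 = 1 ∧ x ^ 2 % 8 = 1) := by
  rcases Int.emod_two_eq_zero_or_one x with h | h
  · left
    refine ⟨h, ?_⟩
    obtain ⟨k, rfl⟩ := Int.dvd_of_emod_eq_zero h
    have : (2 * k) ^ 2 = 4 * k ^ 2 := by ring
    omega
  · right
    refine ⟨h, ?_⟩
    have h8 : x % 8 = 1 ∨ x % 8 = 3 ∨ x % 8 = 5 ∨ x % 8 = 7 := by omega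
    rcases h8 with h8 | h8 | h8 | h8 <;> simp [pow_two, Int.mul_emod, h8]

lemma x6_conc : ∀ (N : ℕ) (r s u v : ℤ), s.natAbs ≤ N → IsCoprime r s → r % 2 = 1 →
    r ^ 2 + s ^ 2 = u ^ 2 → r ^ 2 + 4 * s ^ 2 = v ^ 2 → s = 0 := by
  intro N
  induction N with
  | zero => intro r s u v h; intros; omega
  | succ N ih =>
    intro r s u v hN hc hr h1 h2
    by_contra hs
    have hr0 : 0 < r ^ 2 := by
      have : r ≠ 0 := by rintro rfl; simp at hr
      positivity
    have hs2 : s % 2 = 0 := by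
      have := x6_sq_mod4 r
      have := x6_sq_mod4 s
      have := x6_sq_mod4 u
      omega
    have hu : 0 < |u| := abs_pos.2 (by rintro rfl; nlinarith [sq_nonneg s])
    have hv : 0 < |v| := abs_pos.2 (by rintro rfl; nlinarith [sq_nonneg s])
    have t1 : PythagoreanTriple r s |u| := by
      unfold PythagoreanTriple
      rw [abs_mul_abs_self]; linear_combination h1
    have t2 : PythagoreanTriple r (2 * s) |v| := by
      unfold PythagoreanTriple
      rw [abs_mul_abs_self]; linear_combination h2
    have hr2 : IsCoprime r 2 := by
      refine ⟨1, -(r / 2), ?_⟩; omega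
    have hc2 : IsCoprime r (2 * s) := hr2.mul_right hc
    obtain ⟨p, q, a1, a2, -, a3, a4, -⟩ :=
      t1.coprime_classification' (Int.isCoprime_iff_gcd_eq_one.1 hc) hr hu
    obtain ⟨P, Q, b1, b2, -, b3, b4, -⟩ :=
      t2.coprime_classification' (Int.isCoprime_iff_gcd_eq_one.1 hc2) hr hv
    have hpq : IsCoprime p q := Int.isCoprime_iff_gcd_eq_one.2 a3
    have e : P * Q = 2 * (p * q) := by linarith
    have hp0 : p ≠ 0 := by rintro rfl; simp at a2; exact hs a2
    have hq0 : q ≠ 0 := by rintro rfl; simp at a2; exact hs a2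
    have hsn : s.natAbs = 2 * p.natAbs * q.natAbs := by
      rw [a2]; simp [Int.natAbs_mul]
    have hpn : 0 < p.natAbs := Int.natAbs_pos.2 hp0
    have hqn : 0 < q.natAbs := Int.natAbs_pos.2 hq0
    have m1 := x6_sq_mod4 p
    have m2 := x6_sq_mod4 q
    have m3 := x6_sq_mod4 P
    have m4 := x6_sq_mod4 Q
    rcases a4 with ⟨a4, a5⟩ | ⟨a4, a5⟩
    · have hP : P % 2 = 0 := by omega
      obtain ⟨P', rfl⟩ := Int.dvd_of_emod_eq_zero hP
      obtain ⟨a, d, u', v', g1, g2, g3, g4, g5⟩ :=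
        x6_step (p := q) (q := p) (P := Q) (Q := P') hpq.symm a5 (by linarith)
          (by linear_combination b1 - a1)
      have hle : d.natAbs ≤ p.natAbs :=
        Nat.le_of_dvd hpn (Int.natAbs_dvd_natAbs.2 g5)
      have := ih a d u' v' (by nlinarith) g1 g2 g3 g4
      subst this
      exact hp0 (zero_dvd_iff.1 g5)
    · have hQ : Q % 2 = 0 := by omega
      obtain ⟨Q', rfl⟩ := Int.dvd_of_emod_eq_zero hQ
      obtain ⟨a, d, u', v', g1, g2, g3, g4, g5⟩ :=
        x6_step (p := p) (q := q) (P := P) (Q := Q') hpq a4 (by linarith)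
          (by linear_combination a1 - b1)
      have hle : d.natAbs ≤ q.natAbs :=
        Nat.le_of_dvd hqn (Int.natAbs_dvd_natAbs.2 g5)
      have := ih a d u' v' (by nlinarith) g1 g2 g3 g4
      subst this
      exact hq0 (zero_dvd_iff.1 g5)

lemma x6_conc' {r s u v : ℤ} (h : IsCoprime r s) (hr : r % 2 = 1)
    (h1 : r ^ 2 + s ^ 2 = u ^ 2) (h2 : r ^ 2 + 4 * s ^ 2 = v ^ 2) : s = 0 :=
  x6_conc _ r s u v le_rfl h hr h1 h2

lemma x6_plus {r s a : ℤ} (h : IsCoprime r s) (hr : r % 2 = 1)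
    (e : a ^ 2 = (r ^ 2 + s ^ 2) * (r ^ 2 + 4 * s ^ 2)) : s = 0 := by
  have hc := x6_coprime_AB h
  have hr0 : 0 < r ^ 2 := by
    have : r ≠ 0 := by rintro rfl; simp at hr
    positivity
  obtain ⟨u, hu⟩ := Int.sq_of_isCoprime hc e.symm
  obtain ⟨v, hv⟩ := Int.sq_of_isCoprime hc.symm (by rw [mul_comm]; exact e.symm)
  have hu' : r ^ 2 + s ^ 2 = u ^ 2 := by
    rcases hu with hu | hu
    · exact hu
    · nlinarith [sq_nonneg s, sq_nonneg u]
  have hv' : r ^ 2 + 4 * s ^ 2 = v ^ 2 := by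
    rcases hv with hv | hv
    · exact hv
    · nlinarith [sq_nonneg s, sq_nonneg v]
  exact x6_conc' h hr hu' hv'

lemma x6_minus {r s a : ℤ} (h : IsCoprime r s) (hr : r % 2 = 1)
    (e : a ^ 2 = (r ^ 2 - s ^ 2) * (4 * s ^ 2 - r ^ 2)) : a = 0 ∨ s = 0 := by
  by_contra hcon
  push Not at hcon
  obtain ⟨ha, hs⟩ := hcon
  have ha2 : 0 < a ^ 2 := by positivity
  have hs2 : 0 < s ^ 2 := by positivity
  by_cases h3 : (3 : ℤ) ∣ r ^ 2 - s ^ 2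
  · obtain ⟨X, hX⟩ := h3
    obtain ⟨Y, hY⟩ : (3 : ℤ) ∣ 4 * s ^ 2 - r ^ 2 := ⟨s ^ 2 - X, by linarith⟩
    have h3a : (3 : ℤ) ∣ a := by
      apply Int.prime_three.dvd_of_dvd_pow (n := 2)
      rw [e, hX]; exact ⟨X * (4 * s ^ 2 - r ^ 2), by ring⟩
    obtain ⟨a', rfl⟩ := h3a
    rw [hX, hY] at e
    have e' : X * Y = a' ^ 2 := by linarith
    have s1 : s ^ 2 = X + Y := by linarith
    have r1 : r ^ 2 = 4 * X + Y := by linarith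
    have hXY : IsCoprime X Y := by
      refine isCoprime_of_prime_dvd ?_ ?_
      · rintro ⟨rfl, rfl⟩; simp at s1; exact hs s1
      · intro p hp d1 d2
        refine x6_no_common h hp (hp.dvd_of_dvd_pow (n := 2) ?_) (hp.dvd_of_dvd_pow (n := 2) ?_)
        · rw [r1]; exact dvd_add (Dvd.dvd.mul_left d1 _) d2
        · rw [s1]; exact dvd_add d1 d2
    have hpos : 0 < X * Y := by rw [e']; nlinarith
    have hX0 : 0 < X := by
      by_contra hneg
      have : X ≤ 0 := by linarith
      nlinarith
    have hY0 : 0 < Y := by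
      by_contra hneg
      nlinarith
    obtain ⟨u, hu⟩ := Int.sq_of_isCoprime hXY e'
    obtain ⟨v, hv⟩ := Int.sq_of_isCoprime hXY.symm (by rw [mul_comm]; exact e')
    have hu' : X = u ^ 2 := by
      rcases hu with hu | hu
      · exact hu
      · nlinarith [sq_nonneg u]
    have hv' : Y = v ^ 2 := by
      rcases hv with hv | hv
      · exact hv
      · nlinarith [sq_nonneg v]
    subst hu' hv'
    have hvu : IsCoprime v u := ((IsCoprime.pow_iff (by norm_num) (by norm_num)).1 hXY).symm
    have hvodd : v % 2 = 1 := by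
      have := x6_sq_mod4 r
      have := x6_sq_mod4 v
      omega
    have := x6_conc' hvu hvodd (u := s) (v := r) (by linarith) (by linarith)
    subst this
    simp at hX0
  · have hXY : IsCoprime (r ^ 2 - s ^ 2) (4 * s ^ 2 - r ^ 2) := by
      refine isCoprime_of_prime_dvd ?_ ?_
      · rintro ⟨z1, -⟩; exact h3 (by rw [z1]; simp)
      · intro p hp d1 d2
        have d3 : p ∣ 3 * s ^ 2 := by
          have := dvd_add d1 d2
          exact this.trans (dvd_of_eq (by ring))
        rcases hp.dvd_or_dvd d3 with h4 | h4
        · have h5 : (3 : ℤ) ∣ p := ((hp.dvd_prime_iff_associated Int.prime_three).1 h4).symm.dvd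
          exact h3 (h5.trans d1)
        · have h5 : p ∣ r ^ 2 := by
            have := dvd_add d1 h4
            exact this.trans (dvd_of_eq (by ring))
          exact x6_no_common h hp (hp.dvd_of_dvd_pow h5) (hp.dvd_of_dvd_pow h4)
    obtain ⟨v, hv⟩ := Int.sq_of_isCoprime hXY.symm (by rw [mul_comm]; exact e.symm)
    rcases hv with hv | hv
    · have := x6_sq_mod4 r
      have := x6_sq_mod4 v
      omega
    · rw [hv] at e
      have : 0 < r ^ 2 - s ^ 2 := by linarith [sq_nonneg v]
      nlinarith [sq_nonneg v]

lemma x6_case1_aux {a b m n : ℤ} (hb : b ≠ 0) (hmn : IsCoprime m n) (hm : m % 2 = 1)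
    (hn : n % 2 = 0) (e : m * n = 2 * b ^ 2)
    (hw : a ^ 2 - 5 * b ^ 2 = m ^ 2 + n ^ 2 ∨ a ^ 2 - 5 * b ^ 2 = -(m ^ 2 + n ^ 2)) :
    a = 0 := by
  obtain ⟨k, rfl⟩ := Int.dvd_of_emod_eq_zero hn
  have e' : m * k = b ^ 2 := by linarith
  have hmk : IsCoprime m k := hmn.of_mul_right_right
  have hb2 : 0 < b ^ 2 := by positivity
  obtain ⟨r, hr⟩ := Int.sq_of_isCoprime hmk e'
  obtain ⟨s, hs⟩ := Int.sq_of_isCoprime hmk.symm (by rw [mul_comm]; exact e')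
  have hm2 : m ^ 2 = r ^ 4 := by rcases hr with rfl | rfl <;> ring
  have hk2 : k ^ 2 = s ^ 4 := by rcases hs with rfl | rfl <;> ring
  have hbb : b ^ 2 = r ^ 2 * s ^ 2 := by
    have : 0 ≤ r ^ 2 * s ^ 2 := by positivity
    rcases hr with rfl | rfl <;> rcases hs with rfl | rfl <;> nlinarith
  have hs0 : s ≠ 0 := by rintro rfl; simp at hbb; exact hb hbb
  have hrodd : r % 2 = 1 := by
    have := x6_sq_mod4 r
    rcases hr with rfl | rfl <;> omega
  have hrs : IsCoprime r s := by
    refine (IsCoprime.pow_iff (m := 4) (n := 4) (by norm_num) (by norm_num)).1 ?_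
    rw [← hm2, ← hk2]; exact hmk.pow
  rcases hw with hw | hw
  · exact absurd (x6_plus hrs hrodd (a := a) (by linear_combination hw + 5 * hbb + hm2 + 4 * hk2)) hs0
  · rcases x6_minus hrs hrodd (a := a) (by linear_combination hw + 5 * hbb - hm2 - 4 * hk2) with h | h
    · exact h
    · exact absurd h hs0

lemma x6_case1 {a b c : ℤ} (h : IsCoprime a b) (hpar : (a + b) % 2 = 1)
    (e : (a ^ 2 - 9 * b ^ 2) * (a ^ 2 - b ^ 2) = c ^ 2) : a = 0 ∨ b = 0 := by
  by_cases hb : b = 0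
  · exact Or.inr hb
  left
  have hwodd : (a ^ 2 - 5 * b ^ 2) % 2 = 1 := by
    have := x6_sq_mod4 a
    have := x6_sq_mod4 b
    omega
  obtain ⟨w, hw⟩ : ∃ w, w = a ^ 2 - 5 * b ^ 2 := ⟨_, rfl⟩
  rw [← hw] at hwodd
  have e1 : c ^ 2 + (4 * b ^ 2) ^ 2 = w ^ 2 := by rw [hw]; linear_combination -e
  have hcodd : c % 2 = 1 := by
    have := x6_sq_mod4 c
    have := x6_sq_mod4 w
    have : (4 * b ^ 2) ^ 2 = 4 * (4 * b ^ 4) := by ring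
    omega
  have hcb : IsCoprime c (4 * b ^ 2) := by
    refine isCoprime_of_prime_dvd ?_ ?_
    · rintro ⟨rfl, -⟩; simp at hcodd
    · intro p hp d1 d2
      have d3 : p ∣ w := by
        apply hp.dvd_of_dvd_pow (n := 2)
        rw [← e1]
        exact dvd_add (dvd_pow d1 (by norm_num)) (dvd_pow d2 (by norm_num))
      rcases hp.dvd_or_dvd d2 with h4 | h4
      · have h5 : p ∣ 2 := hp.dvd_of_dvd_pow (n := 2) (by norm_num; exact h4)
        have h6 : (2 : ℤ) ∣ p := ((hp.dvd_prime_iff_associated Int.prime_two).1 h5).symm.dvd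
        have := h6.trans d1
        omega
      · have h5 : p ∣ a ^ 2 := by
          have := dvd_add d3 (Dvd.dvd.mul_left h4 5)
          rw [hw] at this
          exact this.trans (dvd_of_eq (by ring))
        exact x6_no_common h hp (hp.dvd_of_dvd_pow h5) (hp.dvd_of_dvd_pow h4)
  have hw0 : 0 < |w| := abs_pos.2 (by rintro rfl; simp at hwodd)
  have t : PythagoreanTriple c (4 * b ^ 2) |w| := by
    unfold PythagoreanTriple
    rw [abs_mul_abs_self]; linear_combination e1
  obtain ⟨m, n, -, a2, a3, a4, a5, -⟩ :=
    t.coprime_classification' (Int.isCoprime_iff_gcd_eq_one.1 hcb) hcodd hw0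
  have hmn : IsCoprime m n := Int.isCoprime_iff_gcd_eq_one.2 a4
  have hw' : a ^ 2 - 5 * b ^ 2 = m ^ 2 + n ^ 2 ∨ a ^ 2 - 5 * b ^ 2 = -(m ^ 2 + n ^ 2) := by
    rw [← hw, ← a3]
    exact eq_or_eq_neg_of_abs_eq rfl
  rcases a5 with ⟨p1, p2⟩ | ⟨p1, p2⟩
  · exact x6_case1_aux hb hmn.symm p2 p1 (by linarith) (by rw [add_comm (n ^ 2)]; exact hw')
  · exact x6_case1_aux hb hmn p1 p2 (by linarith) hw'

lemma x6_case2 {a b c : ℤ} (h : IsCoprime a b) (ha : a % 2 = 1) (hb : b % 2 = 1)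
    (e : (a ^ 2 - 9 * b ^ 2) * (a ^ 2 - b ^ 2) = c ^ 2) : c = 0 := by
  obtain ⟨w, hw, hwodd⟩ : ∃ w, a ^ 2 - 5 * b ^ 2 = 4 * w ∧ w % 2 = 1 := by
    have := x6_sq_mod4 a
    have := x6_sq_mod4 b
    exact ⟨(a ^ 2 - 5 * b ^ 2) / 4, by omega, by omega⟩
  have e0 : c ^ 2 = 4 ^ 2 * (w ^ 2 - b ^ 4) := by
    linear_combination -e + (a ^ 2 - 5 * b ^ 2 + 4 * w) * hw
  obtain ⟨d, rfl⟩ : (4 : ℤ) ∣ c := (Int.pow_dvd_pow_iff (by norm_num)).1 (Dvd.intro _ e0.symm)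
  have e1 : (b ^ 2) ^ 2 + d ^ 2 = w ^ 2 := by linarith
  have hbodd : b ^ 2 % 2 = 1 := by
    have := x6_sq_mod4 b
    omega
  have hcb : IsCoprime (b ^ 2) d := by
    refine isCoprime_of_prime_dvd ?_ ?_
    · rintro ⟨z, -⟩; rw [z] at hbodd; simp at hbodd
    · intro p hp d1 d2
      have d3 : p ∣ w := by
        apply hp.dvd_of_dvd_pow (n := 2)
        rw [← e1]
        exact dvd_add (dvd_pow d1 (by norm_num)) (dvd_pow d2 (by norm_num))
      have h5 : p ∣ a ^ 2 := by
        have := dvd_add (Dvd.dvd.mul_left d3 4) (Dvd.dvd.mul_left d1 5)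
        rw [← hw] at this
        exact this.trans (dvd_of_eq (by ring))
      exact x6_no_common h hp (hp.dvd_of_dvd_pow h5) (hp.dvd_of_dvd_pow d1)
  have hw0 : 0 < |w| := abs_pos.2 (by rintro rfl; simp at hwodd)
  have t : PythagoreanTriple (b ^ 2) d |w| := by
    unfold PythagoreanTriple
    rw [abs_mul_abs_self]; linear_combination e1
  obtain ⟨m, n, a1, a2, a3, a4, a5, -⟩ :=
    t.coprime_classification' (Int.isCoprime_iff_gcd_eq_one.1 hcb) hbodd hw0
  have hmn : IsCoprime m n := Int.isCoprime_iff_gcd_eq_one.2 a4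
  have hw' : w = m ^ 2 + n ^ 2 ∨ w = -(m ^ 2 + n ^ 2) := by
    rw [← a3]
    exact eq_or_eq_neg_of_abs_eq rfl
  have key : m = 0 ∨ n = 0 := by
    rcases hw' with hw' | hw'
    · have ea : a ^ 2 = 9 * m ^ 2 - n ^ 2 := by linarith
      exact (x6_case1 (c := a * b) hmn.symm (by omega) (by
        rw [mul_pow, ea, a1]; ring)).symm
    · have ea : a ^ 2 = m ^ 2 - 9 * n ^ 2 := by linarith
      exact x6_case1 (c := a * b) hmn (by omega) (by
        rw [mul_pow, ea, a1])
  rw [a2]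
  rcases key with rfl | rfl <;> simp

lemma x6_main {y z : ℚ} (h : y ^ 2 = (z ^ 2 - 9) * (z ^ 2 - 1)) : z = 0 ∨ y = 0 := by
  have hd : (z.den : ℚ) ≠ 0 := by exact_mod_cast z.den_nz
  have hz : z * z.den = z.num := Rat.mul_den_eq_num z
  set a : ℤ := z.num with ha
  set b : ℤ := (z.den : ℤ) with hb
  have hbq : (z.den : ℚ) = (b : ℚ) := by simp [hb]
  rw [hbq] at hd hz
  have hab : IsCoprime a b := by
    rw [Int.isCoprime_iff_gcd_eq_one]
    exact z.reduced
  have hb0 : b ≠ 0 := by exact_mod_cast hd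
  have hsq : IsSquare ((((a ^ 2 - 9 * b ^ 2) * (a ^ 2 - b ^ 2) : ℤ)) : ℚ) := by
    refine ⟨y * b ^ 2, ?_⟩
    push_cast
    rw [← hz]
    linear_combination -(b : ℚ) ^ 4 * h
  rw [Rat.isSquare_intCast_iff] at hsq
  obtain ⟨c, hc⟩ := hsq
  rw [← pow_two] at hc
  have hpar : (a + b) % 2 = 1 ∨ (a % 2 = 1 ∧ b % 2 = 1) := by
    by_contra hcon
    have h1 : (2 : ℤ) ∣ a := by omega
    have h2 : (2 : ℤ) ∣ b := by omega
    exact x6_no_common hab Int.prime_two h1 h2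
  rcases hpar with hpar | ⟨p1, p2⟩
  · rcases x6_case1 hab hpar hc with h0 | h0
    · left
      exact Rat.num_eq_zero.1 h0
    · exact absurd h0 hb0
  · right
    have c0 := x6_case2 hab p1 p2 hc
    rw [c0] at hc
    have hq : ((a : ℚ) ^ 2 - 9 * b ^ 2) * (a ^ 2 - b ^ 2) = 0 := by exact_mod_cast hc
    rw [← hz] at hq
    have h4 : (b : ℚ) ^ 4 * y ^ 2 = 0 := by rw [h]; linear_combination hq
    rcases mul_eq_zero.1 h4 with h5 | h5
    · exact absurd h5 (pow_ne_zero 4 hd)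
    · exact pow_eq_zero_iff (by norm_num) |>.1 h5

/-- The affine rational points of `X₆ = {(h,y,z) : y² = h(h+8), z² = h+9}` are exactly the
six listed triples. -/
theorem X6_rational_points :
    {p : ℚ × ℚ × ℚ | p.2.1 ^ 2 = p.1 * (p.1 + 8) ∧ p.2.2 ^ 2 = p.1 + 9} =
      {(-9, 3, 0), (-9, -3, 0), (-8, 0, 1), (-8, 0, -1), (0, 0, 3), (0, 0, -3)} := by
  ext ⟨h, y, z⟩
  simp only [Set.mem_setOf_eq, Set.mem_insert_iff, Set.mem_singleton_iff, Prod.mk.injEq]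
  constructor
  · rintro ⟨h1, h2⟩
    have hh : h = z ^ 2 - 9 := by linarith
    subst hh
    rcases x6_main (y := y) (z := z) (by rw [h1]; ring) with rfl | rfl
    · have : (y - 3) * (y + 3) = 0 := by linear_combination h1
      rcases mul_eq_zero.1 this with h3 | h3
      · have : y = 3 := by linarith
        subst this; norm_num
      · have : y = -3 := by linarith
        subst this; norm_num
    · have : ((z - 3) * (z + 3)) * ((z - 1) * (z + 1)) = 0 := by linear_combination -h1
      rcases mul_eq_zero.1 this with h3 | h3 <;> rcases mul_eq_zero.1 h3 with h3 | h3
      · have : z = 3 := by linarith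
        subst this; norm_num
      · have : z = -3 := by linarith
        subst this; norm_num
      · have : z = 1 := by linarith
        subst this; norm_num
      · have : z = -1 := by linarith
        subst this; norm_num
  · rintro (⟨rfl, rfl, rfl⟩ | ⟨rfl, rfl, rfl⟩ | ⟨rfl, rfl, rfl⟩ | ⟨rfl, rfl, rfl⟩ |
      ⟨rfl, rfl, rfl⟩ | ⟨rfl, rfl, rfl⟩) <;> norm_num
end
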